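/- For every complex number q with 0 < |q| < 1, one has ∑_{i,j,k,l ≥ 0} q^{i²+j²+k²+l²−il−jl−kl−k} / ((q²;q²)_i (q²;q²)_j (q²;q²)_k (q²;q²)_l) = 8 J_2³ / J_1³. -/

import Mathlib

open scoped BigOperators

/-- The infinite q-Pochhammer symbol `(a; q)_∞ = ∏_{k=0}^∞ (1 - a q^k)`. -/
noncomputable def qPochInf (a q : ℂ) : ℂ := ∏' n : ℕ, (1 - a * q ^ n)

/-- The finite q-Pochhammer symbol `(a; q)_n = ∏_{k=0}^{n-1} (1 - a q^k)`. -/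
noncomputable def qPoch (a q : ℂ) (n : ℕ) : ℂ :=
  Finset.prod (Finset.range n) (fun k => 1 - a * q ^ k)

/-- `J_m = (q^m; q^m)_∞`. -/
noncomputable def J (q : ℂ) (m : ℕ) : ℂ := qPochInf (q ^ m) (q ^ m)

/-- `J_{a,m} = (q^a; q^m)_∞ (q^{m-a}; q^m)_∞ (q^m; q^m)_∞`. -/
noncomputable def Jam (q : ℂ) (a m : ℕ) : ℂ :=
  qPochInf (q ^ a) (q ^ m) * qPochInf (q ^ (m - a)) (q ^ m) * qPochInf (q ^ m) (q ^ m)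

/-!
Weight the summand by `z^i`. Euler's identity
`∑ q^(n choose 2) x^n / (q;q)_n = (-x;q)_∞`, in base `q²`, evaluates the sums over `j` and `k` as
`(-q^(1-l);q²)_∞` and `(-q^(-l);q²)_∞`, which interlace to `(-q^(-l);q)_∞`. Reflecting the first
`l` factors of this product gives `q^(-(l+1 choose 2)) (-q;q)_l (-1;q)_∞`, and `(-q;q)_l` turns the
denominator `(q²;q²)_l` into `(q;q)_l`. The sum over `l` is thus again of Euler's type, now in base
`q`, with value `(-1;q)_∞ (-q^(-i);q)_∞`; the same reflection makes the sum over `i` one of Euler's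
type as well, and the total is `(-1;q)_∞² (-z;q)_∞`. At `z = 1` this is `(-1;q)_∞³`, where
`(-1;q)_∞ = 2 (-q;q)_∞ = 2 J₂ / J₁`.
-/

open Filter Topology

section Pochhammer

variable (a q : ℂ)

lemma qPoch_zero : qPoch a q 0 = 1 := by
  simp [qPoch]

lemma qPoch_succ (n : ℕ) : qPoch a q (n + 1) = qPoch a q n * (1 - a * q ^ n) :=
  Finset.prod_range_succ _ n

lemma qPoch_succ_left (n : ℕ) : qPoch a q (n + 1) = (1 - a) * qPoch (a * q) q n := by
  rw [qPoch, qPoch, Finset.prod_range_succ', pow_zero, mul_one, mul_comm]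
  simp only [pow_succ', mul_assoc]

lemma qPoch_mul_qPoch_neg (n : ℕ) :
    qPoch a q n * qPoch (-a) q n = qPoch (a ^ 2) (q ^ 2) n := by
  simp only [qPoch, ← Finset.prod_mul_distrib]
  exact Finset.prod_congr rfl fun k _ ↦ by ring

variable {q}

lemma summable_norm_neg_mul_pow (hq : ‖q‖ < 1) : Summable fun n : ℕ ↦ ‖-(a * q ^ n)‖ := by
  simp only [norm_neg, norm_mul, norm_pow]
  exact (summable_geometric_of_lt_one (norm_nonneg _) hq).mul_left _

lemma multipliable_one_sub_mul_pow (hq : ‖q‖ < 1) : Multipliable fun n : ℕ ↦ 1 - a * q ^ n := by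
  simpa only [sub_eq_add_neg] using
    multipliable_one_add_of_summable (summable_norm_neg_mul_pow a hq)

lemma tendsto_qPoch (hq : ‖q‖ < 1) : Tendsto (qPoch a q) atTop (𝓝 (qPochInf a q)) :=
  (multipliable_one_sub_mul_pow a hq).tendsto_prod_tprod_nat

lemma qPoch_mul_qPochInf (hq : ‖q‖ < 1) (n : ℕ) :
    qPoch a q n * qPochInf (a * q ^ n) q = qPochInf a q := by
  have hshift (k : ℕ) : 1 - a * q ^ n * q ^ k = 1 - a * q ^ (k + n) := by ring
  have htail := multipliable_one_sub_mul_pow (a * q ^ n) hq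
  simp only [qPoch, qPochInf, hshift] at htail ⊢
  exact htail.prod_mul_tprod_nat_mul' (f := fun k ↦ 1 - a * q ^ k)

lemma norm_sq_lt_one (hq : ‖q‖ < 1) : ‖q ^ 2‖ < 1 := by
  simpa only [norm_pow] using pow_lt_one₀ (norm_nonneg q) hq two_ne_zero

lemma qPochInf_mul_qPochInf_neg (hq : ‖q‖ < 1) :
    qPochInf a q * qPochInf (-a) q = qPochInf (a ^ 2) (q ^ 2) :=
  tendsto_nhds_unique ((tendsto_qPoch a hq).mul (tendsto_qPoch (-a) hq)) <| by
    simpa only [qPoch_mul_qPoch_neg] using tendsto_qPoch (a ^ 2) (norm_sq_lt_one hq)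

lemma qPochInf_sq_mul_qPochInf_mul_sq (hq : ‖q‖ < 1) :
    qPochInf a (q ^ 2) * qPochInf (a * q) (q ^ 2) = qPochInf a q := by
  have heven (n : ℕ) : 1 - a * (q ^ 2) ^ n = 1 - a * q ^ (2 * n) := by ring
  have hodd (n : ℕ) : 1 - a * q * (q ^ 2) ^ n = 1 - a * q ^ (2 * n + 1) := by ring
  have hmul_even := multipliable_one_sub_mul_pow a (norm_sq_lt_one hq)
  have hmul_odd := multipliable_one_sub_mul_pow (a * q) (norm_sq_lt_one hq)
  simp only [qPochInf, heven, hodd] at hmul_even hmul_odd ⊢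
  exact tprod_even_mul_odd (f := fun n ↦ 1 - a * q ^ n) hmul_even hmul_odd

lemma one_sub_self_mul_pow_ne_zero (hq : ‖q‖ < 1) (n : ℕ) : 1 - q * q ^ n ≠ 0 := by
  intro h
  have hlt : ‖q ^ (n + 1)‖ < 1 := by
    simpa only [norm_pow] using pow_lt_one₀ (norm_nonneg q) hq n.succ_ne_zero
  rw [pow_succ', ← sub_eq_zero.1 h, norm_one] at hlt
  exact lt_irrefl 1 hlt

lemma qPoch_self_ne_zero (hq : ‖q‖ < 1) (n : ℕ) : qPoch q q n ≠ 0 :=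
  Finset.prod_ne_zero_iff.2 fun k _ ↦ one_sub_self_mul_pow_ne_zero hq k

lemma qPochInf_self_ne_zero (hq : ‖q‖ < 1) : qPochInf q q ≠ 0 := by
  simpa only [qPochInf, sub_eq_add_neg] using
    tprod_one_add_ne_zero_of_summable (f := fun n : ℕ ↦ -(q * q ^ n))
      (by simpa only [← sub_eq_add_neg] using one_sub_self_mul_pow_ne_zero hq)
      (summable_norm_neg_mul_pow q hq)

lemma exists_norm_inv_qPoch_self_le (hq : ‖q‖ < 1) :
    ∃ M : ℝ, ∀ n, ‖(qPoch q q n)⁻¹‖ ≤ M := by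
  obtain ⟨M, hM⟩ := ((tendsto_qPoch q hq).inv₀ (qPochInf_self_ne_zero hq)).norm.bddAbove_range
  exact ⟨M, fun n ↦ hM ⟨n, rfl⟩⟩

lemma qPochInf_neg_one_eq_two_mul_J_div_J (hq : ‖q‖ < 1) :
    qPochInf (-1) q = 2 * J q 2 / J q 1 := by
  have hfirst : qPochInf (-1) q = 2 * qPochInf (-q) q := by
    rw [← qPoch_mul_qPochInf (-1) hq 1, qPoch_succ, qPoch_zero]
    norm_num
  have hne := qPochInf_self_ne_zero hq
  rw [hfirst, J, J, pow_one, eq_div_iff hne, ← qPochInf_mul_qPochInf_neg q hq]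
  ring

lemma qPoch_neg_inv_pow_mul_pow_choose (hq0 : q ≠ 0) (n : ℕ) :
    qPoch (-(q ^ n)⁻¹) q n * q ^ (n + 1).choose 2 = qPoch (-q) q n := by
  induction n with
  | zero => simp [qPoch_zero]
  | succ n ih =>
    have hshift : -(q ^ (n + 1))⁻¹ * q = -(q ^ n)⁻¹ := by
      field_simp
      ring
    have hfactor : (1 - -(q ^ (n + 1))⁻¹) * q ^ (n + 1) = 1 - -q * q ^ n := by
      rw [sub_neg_eq_add, add_mul, inv_mul_cancel₀ (pow_ne_zero _ hq0)]
      ring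
    rw [qPoch_succ_left, hshift, Nat.choose_succ_succ' (n + 1), Nat.choose_one_right, pow_add,
      qPoch_succ, ← ih, ← hfactor]
    ring

lemma qPochInf_neg_inv_pow_mul_pow_choose (hq0 : q ≠ 0) (hq : ‖q‖ < 1) (n : ℕ) :
    qPochInf (-(q ^ n)⁻¹) q * q ^ (n + 1).choose 2 = qPochInf (-1) q * qPoch (-q) q n := by
  have htail : -(q ^ n)⁻¹ * q ^ n = -1 := by
    rw [neg_mul, inv_mul_cancel₀ (pow_ne_zero n hq0)]
  rw [← qPoch_mul_qPochInf _ hq n, htail, ← qPoch_neg_inv_pow_mul_pow_choose hq0]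
  ring

end Pochhammer

section Euler

/-- The general term `q^(n choose 2) x^n / (q;q)_n` of Euler's series for `(-x;q)_∞`. -/
noncomputable def eulerTerm (q x : ℂ) (n : ℕ) : ℂ :=
  q ^ n.choose 2 * x ^ n / qPoch q q n

lemma eulerTerm_zero (q x : ℂ) : eulerTerm q x 0 = 1 := by
  simp [eulerTerm, qPoch_zero]

lemma eulerTerm_mul_right (q x c : ℂ) (n : ℕ) :
    eulerTerm q (x * c) n = c ^ n * eulerTerm q x n := by
  rw [eulerTerm, eulerTerm, mul_pow]
  ring

variable {q : ℂ}

lemma eulerTerm_succ (hq : ‖q‖ < 1) (x : ℂ) (n : ℕ) :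
    eulerTerm q x (n + 1) * (1 - q * q ^ n) = x * (q ^ n * eulerTerm q x n) := by
  have hfactor := one_sub_self_mul_pow_ne_zero hq n
  have hpoch := qPoch_self_ne_zero hq n
  rw [eulerTerm, eulerTerm, qPoch_succ, Nat.choose_succ_succ' n 1, Nat.choose_one_right]
  field_simp
  ring

lemma summable_eulerTerm (hq : ‖q‖ < 1) (x : ℂ) : Summable (eulerTerm q x) := by
  have hratio : Tendsto (fun n : ℕ ↦ ‖x * q ^ n / (1 - q * q ^ n)‖) atTop (𝓝 0) := by
    have hpow := tendsto_pow_atTop_nhds_zero_of_norm_lt_one hq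
    simpa using ((hpow.const_mul x).div ((hpow.const_mul q).const_sub 1) (by simp)).norm
  refine summable_of_ratio_norm_eventually_le one_half_lt_one ?_
  filter_upwards [hratio.eventually_le_const one_half_pos] with n hn
  have hstep : eulerTerm q x (n + 1) = x * q ^ n / (1 - q * q ^ n) * eulerTerm q x n := by
    rw [div_mul_eq_mul_div, eq_div_iff (one_sub_self_mul_pow_ne_zero hq n), eulerTerm_succ hq,
      mul_assoc]
  rw [hstep, norm_mul]
  gcongr

lemma tsum_eulerTerm_eq_one_add_mul (hq : ‖q‖ < 1) (x : ℂ) :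
    ∑' n, eulerTerm q x n = (1 + x) * ∑' n, eulerTerm q (x * q) n := by
  have hstep (n : ℕ) :
      eulerTerm q x (n + 1) = eulerTerm q (x * q) (n + 1) + x * eulerTerm q (x * q) n := by
    rw [eulerTerm_mul_right, eulerTerm_mul_right]
    linear_combination eulerTerm_succ hq x n
  have hs := summable_eulerTerm hq (x * q)
  rw [(summable_eulerTerm hq x).tsum_eq_zero_add, funext hstep,
    ((summable_nat_add_iff 1).2 hs).tsum_add (hs.mul_left x), tsum_mul_left, eulerTerm_zero,
    ← add_assoc, add_mul, one_mul]
  nth_rw 2 [hs.tsum_eq_zero_add]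
  rw [eulerTerm_zero]

lemma tsum_eulerTerm_eq_qPoch_mul (hq : ‖q‖ < 1) (x : ℂ) (N : ℕ) :
    ∑' n, eulerTerm q x n = qPoch (-x) q N * ∑' n, eulerTerm q (x * q ^ N) n := by
  induction N with
  | zero => simp [qPoch_zero]
  | succ N ih =>
    rw [ih, tsum_eulerTerm_eq_one_add_mul hq, qPoch_succ, pow_succ, ← mul_assoc x]
    ring

lemma tendsto_tsum_eulerTerm_mul_pow (hq : ‖q‖ < 1) (x : ℂ) :
    Tendsto (fun N : ℕ ↦ ∑' n, eulerTerm q (x * q ^ N) n) atTop (𝓝 1) := by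
  have hlim (n : ℕ) :
      Tendsto (fun N : ℕ ↦ eulerTerm q (x * q ^ N) n) atTop (𝓝 (if n = 0 then 1 else 0)) := by
    rcases eq_or_ne n 0 with rfl | hn
    · simp [eulerTerm_zero]
    · have hpow := (tendsto_pow_atTop_nhds_zero_of_norm_lt_one hq).pow n
      simpa [eulerTerm_mul_right, hn] using hpow.mul_const (eulerTerm q x n)
  have hbound (N n : ℕ) : ‖eulerTerm q (x * q ^ N) n‖ ≤ ‖eulerTerm q x n‖ := by
    rw [eulerTerm_mul_right, norm_mul, norm_pow, norm_pow]
    exact mul_le_of_le_one_left (norm_nonneg _)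
      (pow_le_one₀ (by positivity) (pow_le_one₀ (norm_nonneg q) hq.le))
  simpa only [tsum_ite_eq] using
    tendsto_tsum_of_dominated_convergence (summable_eulerTerm hq x).norm hlim
      (Eventually.of_forall hbound)

theorem hasSum_eulerTerm (hq : ‖q‖ < 1) (x : ℂ) :
    HasSum (eulerTerm q x) (qPochInf (-x) q) := by
  have hlim := (tendsto_qPoch (-x) hq).mul (tendsto_tsum_eulerTerm_mul_pow hq x)
  simp only [← tsum_eulerTerm_eq_qPoch_mul hq, mul_one] at hlim
  rw [tendsto_nhds_unique hlim tendsto_const_nhds]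
  exact (summable_eulerTerm hq x).hasSum

end Euler

section SquareExponents

/-- The term `q^(n²) x^n / (q²;q²)_n`; the quadruple series is built from four of these. -/
noncomputable def squareTerm (q x : ℂ) (n : ℕ) : ℂ :=
  q ^ (n ^ 2) * x ^ n / qPoch (q ^ 2) (q ^ 2) n

lemma choose_two_add_succ_choose_two (n : ℕ) : n.choose 2 + (n + 1).choose 2 = n ^ 2 := by
  induction n with
  | zero => rfl
  | succ n ih =>
    simp only [Nat.choose_succ_succ' _ 1, Nat.choose_one_right, Nat.reduceAdd] at ih ⊢
    linarith

lemma squareTerm_eq_eulerTerm (q x : ℂ) : squareTerm q x = eulerTerm (q ^ 2) (x * q) := by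
  funext n
  have hexp : n ^ 2 = 2 * n.choose 2 + n := by
    rw [← choose_two_add_succ_choose_two, Nat.choose_succ_succ' n 1, Nat.choose_one_right]
    ring
  rw [squareTerm, eulerTerm, hexp]
  ring

variable {q : ℂ}

lemma hasSum_squareTerm (hq : ‖q‖ < 1) (x : ℂ) :
    HasSum (squareTerm q x) (qPochInf (-(x * q)) (q ^ 2)) := by
  rw [squareTerm_eq_eulerTerm]
  exact hasSum_eulerTerm (norm_sq_lt_one hq) _

lemma hasSum_squareTerm_mul_squareTerm (hq0 : q ≠ 0) (hq : ‖q‖ < 1) (x : ℂ) :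
    HasSum (fun p : ℕ × ℕ ↦ squareTerm q x p.1 * squareTerm q (x * q⁻¹) p.2)
      (qPochInf (-x) q) := by
  have hj := hasSum_squareTerm hq x
  have hk := hasSum_squareTerm hq (x * q⁻¹)
  rw [inv_mul_cancel_right₀ hq0] at hk
  rw [← qPochInf_sq_mul_qPochInf_mul_sq (-x) hq, neg_mul, mul_comm (qPochInf _ _)]
  exact hj.mul hk (summable_mul_of_summable_norm hj.summable.norm hk.summable.norm)

lemma squareTerm_mul_qPochInf_neg_inv_pow (hq0 : q ≠ 0) (hq : ‖q‖ < 1) (x : ℂ) (n : ℕ) :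
    squareTerm q x n * qPochInf (-(q ^ n)⁻¹) q = qPochInf (-1) q * eulerTerm q x n := by
  have hden := qPoch_mul_qPoch_neg q q n
  have hne := qPoch_self_ne_zero (norm_sq_lt_one hq) n
  rw [← hden, mul_ne_zero_iff] at hne
  obtain ⟨hne_left, hne_right⟩ := hne
  rw [squareTerm, eulerTerm, ← hden, ← choose_two_add_succ_choose_two, pow_add, div_mul_eq_mul_div,
    mul_div_assoc', div_eq_div_iff (mul_ne_zero hne_left hne_right) hne_left]
  linear_combination
    q ^ n.choose 2 * x ^ n * qPoch q q n * qPochInf_neg_inv_pow_mul_pow_choose hq0 hq n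

lemma hasSum_squareTerm_mul_qPochInf_neg_inv_pow (hq0 : q ≠ 0) (hq : ‖q‖ < 1) (x : ℂ) :
    HasSum (fun n ↦ squareTerm q x n * qPochInf (-(q ^ n)⁻¹) q)
      (qPochInf (-1) q * qPochInf (-x) q) := by
  simpa only [squareTerm_mul_qPochInf_neg_inv_pow hq0 hq] using
    (hasSum_eulerTerm hq x).mul_left (qPochInf (-1) q)

end SquareExponents

section Quadruple

lemma hasSum_prod_of_fiberwise {α β γ : Type*} [AddCommMonoid α] [TopologicalSpace α]
    [ContinuousAdd α] [T3Space α] {f : β × γ → α} {g : β → α} {s : α}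
    (hf : Summable f) (hfg : ∀ b, HasSum (fun c ↦ f (b, c)) (g b)) (hg : HasSum g s) :
    HasSum f s :=
  (hf.hasSum.prod_fiberwise hfg).unique hg ▸ hf.hasSum

/-- The exponent of `q` in the quadruple series. -/
def quadExponent (i j k l : ℤ) : ℤ :=
  i ^ 2 + j ^ 2 + k ^ 2 + l ^ 2 - i * l - j * l - k * l - k

/-- The summand of the quadruple series. -/
noncomputable def quadTerm (q : ℂ) (i j k l : ℕ) : ℂ :=
  q ^ quadExponent i j k l /
    (qPoch (q ^ 2) (q ^ 2) i * qPoch (q ^ 2) (q ^ 2) j * qPoch (q ^ 2) (q ^ 2) k *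
      qPoch (q ^ 2) (q ^ 2) l)

variable {q : ℂ}

lemma pow_mul_quadTerm_eq (hq0 : q ≠ 0) (z : ℂ) (i j k l : ℕ) :
    z ^ i * quadTerm q i j k l =
      squareTerm q z i * (squareTerm q (q ^ i)⁻¹ l *
        (squareTerm q (q ^ l)⁻¹ j * squareTerm q ((q ^ l)⁻¹ * q⁻¹) k)) := by
  have hexp : q ^ quadExponent i j k l =
      q ^ i ^ 2 * (q ^ l ^ 2 * ((q ^ i)⁻¹) ^ l *
        (q ^ j ^ 2 * ((q ^ l)⁻¹) ^ j * (q ^ k ^ 2 * ((q ^ l)⁻¹ * q⁻¹) ^ k))) := by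
    simp only [← zpow_natCast, ← zpow_neg, ← zpow_neg_one q, ← zpow_mul, ← zpow_add₀ hq0]
    congr 1
    push_cast [quadExponent]
    ring
  rw [quadTerm, hexp]
  simp only [squareTerm]
  ring

lemma linear_le_quadExponent_add (N i j k l : ℤ) :
    N * i + (i + j + k + l) ≤ quadExponent i j k l + (N ^ 2 + 4 * N + 11) := by
  rw [quadExponent]
  -- Completing the squares leaves `(N ^ 2 + (N + 1) ^ 2 + 1) / 4` as remainder.
  nlinarith [sq_nonneg (2 * i - l - N - 1), sq_nonneg (2 * j - l - 1), sq_nonneg (2 * k - l - 2),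
    sq_nonneg (l - N - 6), sq_nonneg (N + 1), sq_nonneg N]

lemma exists_pow_mul_zpow_quadExponent_le {r t : ℝ} (hr0 : 0 < r) (hr1 : r < 1) (ht : 0 ≤ t) :
    ∃ C : ℝ, ∀ i j k l : ℕ,
      t ^ i * r ^ quadExponent i j k l ≤ C * (r ^ i * (r ^ j * (r ^ k * r ^ l))) := by
  obtain ⟨N, hN⟩ : ∃ N : ℕ, t * r ^ N ≤ 1 :=
    (((tendsto_pow_atTop_nhds_zero_of_lt_one hr0.le hr1).const_mul t).eventually_le_const
      (by simp)).exists
  refine ⟨r ^ (-((N : ℤ) ^ 2 + 4 * N + 11)), fun i j k l ↦ ?_⟩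
  have hexp : r ^ quadExponent i j k l ≤
      r ^ (-((N : ℤ) ^ 2 + 4 * N + 11) + (N * i + (i + j + k + l))) :=
    zpow_le_zpow_right_of_le_one₀ hr0 hr1.le (by linarith [linear_le_quadExponent_add N i j k l])
  calc t ^ i * r ^ quadExponent i j k l
      ≤ t ^ i * r ^ (-((N : ℤ) ^ 2 + 4 * N + 11) + (N * i + (i + j + k + l))) := by gcongr
    _ = (t * r ^ N) ^ i *
        (r ^ (-((N : ℤ) ^ 2 + 4 * N + 11)) * (r ^ i * (r ^ j * (r ^ k * r ^ l)))) := by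
      simp only [zpow_add₀ hr0.ne', zpow_mul, zpow_natCast]
      ring
    _ ≤ r ^ (-((N : ℤ) ^ 2 + 4 * N + 11)) * (r ^ i * (r ^ j * (r ^ k * r ^ l))) :=
      mul_le_of_le_one_left (by positivity) (pow_le_one₀ (by positivity) hN)

lemma summable_quadruple_geometric {r : ℝ} (hr0 : 0 ≤ r) (hr1 : r < 1) :
    Summable fun p : ℕ × ℕ × ℕ × ℕ ↦ r ^ p.1 * (r ^ p.2.1 * (r ^ p.2.2.1 * r ^ p.2.2.2)) := by
  have hgeom := summable_geometric_of_lt_one hr0 hr1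
  have hpos : (0 : ℕ → ℝ) ≤ fun n ↦ r ^ n := fun n ↦ pow_nonneg hr0 n
  have hpair := hgeom.mul_of_nonneg hgeom hpos hpos
  have htriple := hgeom.mul_of_nonneg hpair hpos fun p ↦ mul_nonneg (hpos _) (hpos _)
  exact hgeom.mul_of_nonneg htriple hpos fun p ↦
    mul_nonneg (hpos _) (mul_nonneg (hpos _) (hpos _))

lemma summable_pow_mul_quadTerm (hq0 : q ≠ 0) (hq : ‖q‖ < 1) (z : ℂ) :
    Summable fun p : ℕ × ℕ × ℕ × ℕ ↦ z ^ p.1 * quadTerm q p.1 p.2.1 p.2.2.1 p.2.2.2 := by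
  obtain ⟨M, hM⟩ := exists_norm_inv_qPoch_self_le (norm_sq_lt_one hq)
  have hM0 : 0 ≤ M := (norm_nonneg _).trans (hM 0)
  obtain ⟨C, hC⟩ :=
    exists_pow_mul_zpow_quadExponent_le (norm_pos_iff.2 hq0) hq (norm_nonneg z)
  refine .of_norm_bounded
    (((summable_quadruple_geometric (norm_nonneg q) hq).mul_left C).mul_right (M * M * M * M)) ?_
  rintro ⟨i, j, k, l⟩
  rw [quadTerm, ← mul_div_assoc, div_eq_mul_inv, norm_mul]
  simp only [norm_mul, mul_inv, norm_pow, norm_zpow]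
  have hweight := hC i j k l
  have hbound_nonneg := (by positivity : 0 ≤ ‖z‖ ^ i * ‖q‖ ^ quadExponent i j k l).trans hweight
  gcongr
  exacts [hM i, hM j, hM k, hM l]

theorem stmt_4_general (hq0 : q ≠ 0) (hq : ‖q‖ < 1) (z : ℂ) :
    HasSum (fun p : ℕ × ℕ × ℕ × ℕ ↦ z ^ p.1 * quadTerm q p.1 p.2.1 p.2.2.1 p.2.2.2)
      (qPochInf (-1) q ^ 2 * qPochInf (-z) q) := by
  -- `order (i, l, j, k) = (i, j, k, l)`
  let order : ℕ × ℕ × ℕ × ℕ ≃ ℕ × ℕ × ℕ × ℕ :=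
    (Equiv.refl ℕ).prodCongr ((Equiv.prodComm _ _).trans (Equiv.prodAssoc ℕ ℕ ℕ))
  have hsummable := order.summable_iff.2 (summable_pow_mul_quadTerm hq0 hq z)
  have hsum_jk (i l : ℕ) :
      HasSum (fun p : ℕ × ℕ ↦ z ^ i * quadTerm q i p.1 p.2 l)
        (squareTerm q z i * (squareTerm q (q ^ i)⁻¹ l * qPochInf (-(q ^ l)⁻¹) q)) := by
    simpa only [pow_mul_quadTerm_eq hq0] using
      ((hasSum_squareTerm_mul_squareTerm hq0 hq (q ^ l)⁻¹).mul_left _).mul_left _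
  have hsum_ljk (i : ℕ) :
      HasSum (fun p : ℕ × ℕ × ℕ ↦ z ^ i * quadTerm q i p.2.1 p.2.2 p.1)
        (squareTerm q z i * (qPochInf (-1) q * qPochInf (-(q ^ i)⁻¹) q)) :=
    hasSum_prod_of_fiberwise (hsummable.prod_factor i) (hsum_jk i)
      ((hasSum_squareTerm_mul_qPochInf_neg_inv_pow hq0 hq _).mul_left _)
  have hsum_i : HasSum (fun i ↦ squareTerm q z i * (qPochInf (-1) q * qPochInf (-(q ^ i)⁻¹) q))
      (qPochInf (-1) q ^ 2 * qPochInf (-z) q) := by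
    simpa only [mul_left_comm (qPochInf (-1) q), sq, mul_assoc] using
      (hasSum_squareTerm_mul_qPochInf_neg_inv_pow hq0 hq z).mul_left (qPochInf (-1) q)
  exact order.hasSum_iff.1 (hasSum_prod_of_fiberwise hsummable hsum_ljk hsum_i)

end Quadruple

theorem stmt_4 (q : ℂ) (h0 : 0 < ‖q‖) (h1 : ‖q‖ < 1) :
    (∑' p : ℕ × ℕ × ℕ × ℕ,
      (fun (i j k l : ℕ) =>
        q ^ (((i:ℤ)^2 + (j:ℤ)^2 + (k:ℤ)^2 + (l:ℤ)^2 - (i:ℤ)*(l:ℤ) - (j:ℤ)*(l:ℤ) - (k:ℤ)*(l:ℤ) - (k:ℤ)) : ℤ) /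
          (qPoch (q ^ 2) (q ^ 2) i * qPoch (q ^ 2) (q ^ 2) j * qPoch (q ^ 2) (q ^ 2) k * qPoch (q ^ 2) (q ^ 2) l))
        p.1 p.2.1 p.2.2.1 p.2.2.2)
    = 8 * (J q 2)^3 / (J q 1)^3 := by
  have hsum := stmt_4_general (norm_pos_iff.1 h0) h1 1
  simp only [one_pow, one_mul, qPochInf_neg_one_eq_two_mul_J_div_J h1] at hsum
  exact hsum.tsum_eq.trans (by ring)
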